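/- arXiv:2504.01142 — 4 statements merged into one kernel-verified Lean document; each statement's English description precedes it below -/
import Mathlib

section
/- Let θ ≥ 0 be a real number, let A = ⟨a_1, …, a_c⟩ be a nonempty finite sequence of points of ℝ², and let B be a nonempty finite sequence of points of ℝ². Then for every index j with 1 ≤ j ≤ c, D_H(A, B) ≥ θ^{c−j} · min_{b ∈ B} d(a_j, b), where d is the Euclidean distance. (The decayed pointwise lower bound underlying the k-bound pruning strategy and the intermediate-buffer invariant.) -/
open scoped ENNReal

noncomputable section

abbrev Pt := EuclideanSpace ℝ (Fin 2)

/-- Historical trajectory distance on reversed lists (head = last point). -/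
noncomputable def DHaux (θ : ℝ) : List Pt → List Pt → ℝ≥0∞
  | [], _ => ⊤
  | _ :: _, [] => ⊤
  | [a], [b] => edist a b
  | a :: A, b :: B =>
      max (edist a b) (min (ENNReal.ofReal θ * DHaux θ A B) (DHaux θ (a :: A) B))
termination_by A B => A.length + B.length

/-- Historical trajectory distance `D_H(A, B)`. -/
noncomputable def DH (θ : ℝ) (A B : List Pt) : ℝ≥0∞ :=
  DHaux θ A.reverse B.reverse
/-- The lower bound on reversed lists. -/
theorem DHaux_ge (θ : ℝ) (A B : List Pt) (i : ℕ) (hi : i < A.length) :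
    ENNReal.ofReal θ ^ i * ⨅ b ∈ B, edist A[i] b ≤ DHaux θ A B := by
  induction B generalizing A i with
  | nil =>
    cases A with
    | nil => simp at hi
    | cons a A => simp [DHaux]
  | cons b B ih =>
    cases A with
    | nil => simp at hi
    | cons a A =>
      have hbase : edist a b ≤ DHaux θ (a :: A) (b :: B) := by
        cases A with
        | nil => cases B <;> simp [DHaux]
        | cons a' A => simp [DHaux]
      cases i with
      | zero =>
        refine le_trans ?_ hbase
        simp only [pow_zero, one_mul, List.getElem_cons_zero]
        exact iInf₂_le b (by simp)
      | succ i =>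
        have hi' : i < A.length := by simpa using hi
        have hmono : ∀ x : Pt, (⨅ c ∈ b :: B, edist x c) ≤ ⨅ c ∈ B, edist x c := fun x =>
          le_iInf₂ fun c hc => iInf₂_le c (List.mem_cons_of_mem _ hc)
        have h1 := ih A i hi'
        have h2 := ih (a :: A) (i + 1) hi
        have hrec : min (ENNReal.ofReal θ * DHaux θ A B) (DHaux θ (a :: A) B)
            ≤ DHaux θ (a :: A) (b :: B) := by
          cases A with
          | nil => simp at hi'
          | cons a' A =>
            rw [DHaux.eq_4 θ a (a' :: A) b B (by simp)]
            exact le_max_right _ _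
        refine le_trans (le_min ?_ ?_) hrec
        · rw [pow_succ', mul_assoc]
          refine mul_le_mul_right ?_ _
          exact le_trans (mul_le_mul_right (hmono _) _) h1
        · exact le_trans (mul_le_mul_right (hmono _) _) h2

/-- Decayed pointwise lower bound: for every index j (1-indexed, 1 ≤ j ≤ c = |A|),
D_H(A, B) ≥ θ^(c−j) · min_{b ∈ B} d(a_j, b). -/
theorem DH_ge_decayed_pointwise (θ : ℝ) (hθ : 0 ≤ θ) (A B : List Pt)
    (hA : A ≠ []) (hB : B ≠ []) (j : ℕ) (hj1 : 1 ≤ j) (hj2 : j ≤ A.length) :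
    ENNReal.ofReal θ ^ (A.length - j) *
        ⨅ b ∈ B, edist (A.get ⟨j - 1, by omega⟩) b ≤ DH θ A B := by
  have h := DHaux_ge θ A.reverse B.reverse (A.length - j) (by simp; omega)
  have e : A.length - 1 - (A.length - j) = j - 1 := by omega
  simpa [DH, e] using h

end
end

section
/- Soundness of k-bound pruning: Let θ ≥ 0 and 0 ≤ α ≤ 1 be real numbers, let A = ⟨a_1, …, a_c⟩ and B be nonempty finite sequences of points of ℝ², let dist_T ≥ 0 be a real number (the target-trajectory distance), and let dist_k ≥ 0 be a real threshold. If for some index j with 1 ≤ j ≤ c one has α · θ^{c−j} · min_{b ∈ B} d(a_j, b) ≥ dist_k − (1−α) · dist_T, then the object-trajectory real-time distance satisfies α · D_H(A, B) + (1−α) · dist_T ≥ dist_k. -/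
open scoped ENNReal

noncomputable section

theorem DHaux_lower (θ : ℝ) (A B : List Pt) : ∀ (i : ℕ) (hi : i < A.length),
    ENNReal.ofReal θ ^ i * (⨅ b ∈ B, edist (A[i]) b) ≤ DHaux θ A B := by
  induction A, B using DHaux.induct with
  | case1 B => intro i hi; simp at hi
  | case2 a A => intro i hi; simp [DHaux]
  | case3 a b =>
    intro i hi
    have : i = 0 := by simpa using hi
    subst this
    simp [DHaux]
  | case4 a A b B h ih1 ih2 =>
    intro i hi
    rw [DHaux]
    · rcases i with _ | i
      · refine le_max_of_le_left ?_
        simp only [pow_zero, one_mul, List.getElem_cons_zero]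
        exact iInf₂_le b (by simp)
      · have hmono : ∀ x : Pt, (⨅ c ∈ b :: B, edist x c) ≤ ⨅ c ∈ B, edist x c := fun x =>
          le_iInf₂ fun c hc => iInf₂_le c (List.mem_cons_of_mem _ hc)
        refine le_max_of_le_right (le_min ?_ ?_)
        · have := ih1 i (by simpa using hi)
          rw [pow_succ', mul_assoc, List.getElem_cons_succ]
          exact mul_le_mul_right ((mul_le_mul_right (hmono _) _).trans this) _
        · exact (mul_le_mul_right (hmono _) _).trans (ih2 (i + 1) hi)
    · exact h

/-- Soundness of k-bound pruning: if for some index j the decayed pointwise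
lower bound already exceeds dist_k − (1−α)·dist_T (truncated subtraction in [0,∞]),
then the object-trajectory real-time distance α·D_H(A,B) + (1−α)·dist_T is ≥ dist_k. -/
theorem kBound_pruning_sound (θ α : ℝ) (hθ : 0 ≤ θ) (hα0 : 0 ≤ α) (hα1 : α ≤ 1)
    (A B : List Pt) (hA : A ≠ []) (hB : B ≠ [])
    (distT distk : ℝ) (hT : 0 ≤ distT) (hk : 0 ≤ distk)
    (j : ℕ) (hj1 : 1 ≤ j) (hj2 : j ≤ A.length)
    (hprune : ENNReal.ofReal distk - ENNReal.ofReal (1 - α) * ENNReal.ofReal distT ≤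
      ENNReal.ofReal α * (ENNReal.ofReal θ ^ (A.length - j) *
        ⨅ b ∈ B, edist (A.get ⟨j - 1, by omega⟩) b)) :
    ENNReal.ofReal distk ≤
      ENNReal.ofReal α * DH θ A B + ENNReal.ofReal (1 - α) * ENNReal.ofReal distT := by
  rw [tsub_le_iff_right] at hprune
  refine hprune.trans ?_
  gcongr
  have h := DHaux_lower θ A.reverse B.reverse (A.length - j) (by simp; omega)
  have e : A.length - 1 - (A.length - j) = j - 1 := by omega
  simpa [DH, List.getElem_reverse, e] using h

end
end

section
/- Upper error bound for granularity adjustment: Let θ > 0 be a real number, let A = ⟨a_1, …, a_c⟩ be a nonempty finite sequence of points of ℝ², let B be a finite sequence of points of ℝ², and let B' be a subsequence of B with |B'| ≥ |A|. Then D_H(A, B') ≤ M, where M = max{ θ^{c−j} · d(a_j, b) : 1 ≤ j ≤ c, b ∈ B' }, and consequently the approximation error satisfies D_H(A, B') − D_H(A, B) ≤ M − D_H(A, B) =: E^u, where subtraction is the truncated subtraction in [0, ∞] and d is the Euclidean distance. -/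
open scoped ENNReal

noncomputable section

lemma DHaux_le_of_forall (θ : ℝ) (K : ℝ≥0∞) (B : List Pt) : ∀ (k : ℕ) (A : List Pt), A ≠ [] →
    A.length ≤ B.length →
    (∀ (i : ℕ) (hi : i < A.length), ∀ b ∈ B, ENNReal.ofReal θ ^ (k + i) * edist A[i] b ≤ K) →
    ENNReal.ofReal θ ^ k * DHaux θ A B ≤ K := by
  induction B with
  | nil =>
    intro k A hA hl
    cases A with
    | nil => exact absurd rfl hA
    | cons a A => simp at hl
  | cons b B ih =>
    intro k A hA hl h
    cases A with
    | nil => exact absurd rfl hA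
    | cons a A =>
      have h0 : ENNReal.ofReal θ ^ k * edist a b ≤ K := by
        exact h 0 (by simp) b (by simp)
      cases A with
      | nil =>
        cases B with
        | nil => simpa [DHaux] using h0
        | cons b' B =>
          rw [DHaux]
          · rw [mul_max]
            refine max_le h0 ?_
            refine le_trans (mul_le_mul_right (min_le_right _ _) _) ?_
            exact ih k [a] (by simp) (by simp)
              (fun i hi c hc => h i hi c (List.mem_cons_of_mem _ hc))
          · simp
      | cons a' A =>
        rw [DHaux]
        · rw [mul_max]
          refine max_le h0 ?_
          refine le_trans (mul_le_mul_right (min_le_left _ _) _) ?_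
          rw [← mul_assoc, ← pow_succ]
          refine ih (k + 1) (a' :: A) (by simp) (by simpa using hl) (fun i hi c hc => ?_)
          have := h (i + 1) (by simpa using hi) c (List.mem_cons_of_mem _ hc)
          rw [show k + 1 + i = k + (i + 1) by omega]
          simpa using this
        · simp

/-- Upper error bound for granularity adjustment: if B' is a subsequence of B with
|B'| ≥ |A|, then D_H(A, B') ≤ M := max{ θ^(c−j)·d(a_j, b) : 1 ≤ j ≤ c, b ∈ B' },
and consequently D_H(A,B') − D_H(A,B) ≤ M − D_H(A,B) (truncated subtraction in [0,∞]). -/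
theorem granularity_upper_error_bound (θ : ℝ) (hθ : 0 < θ) (A B B' : List Pt)
    (hA : A ≠ []) (hsub : B'.Sublist B) (hlen : A.length ≤ B'.length)
    (M : ℝ≥0∞)
    (hM : M = ⨆ j : Fin A.length, ⨆ b ∈ B',
        ENNReal.ofReal θ ^ (A.length - ((j : ℕ) + 1)) * edist (A.get j) b) :
    DH θ A B' ≤ M ∧ DH θ A B' - DH θ A B ≤ M - DH θ A B := by
  have key : DH θ A B' ≤ M := by
    have := DHaux_le_of_forall θ M B'.reverse 0 A.reverse (by simpa using hA) (by simpa using hlen)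
      (fun i hi b hb => ?_)
    · simpa [DH] using this
    · have hi' : i < A.length := by simpa using hi
      have hb' : b ∈ B' := by simpa using hb
      rw [hM]
      refine le_trans (le_of_eq ?_) (le_iSup_of_le (⟨A.length - 1 - i, by omega⟩ : Fin A.length)
        (le_iSup₂_of_le b hb' le_rfl))
      rw [List.getElem_reverse]
      simp only [List.get_eq_getElem]
      congr 2
      omega
  exact ⟨key, tsub_le_tsub_right key _⟩

end
end

section
/- Correctness of the dynamic-programming segment partitioning recurrence: Let p_1, …, p_n be points of ℝ², let 1 ≤ l_min ≤ l_max be natural numbers, and for indices 1 ≤ i ≤ j ≤ n let area(i, j) = (max_{i ≤ m ≤ j} x_m − min_{i ≤ m ≤ j} x_m) · (max_{i ≤ m ≤ j} y_m − min_{i ≤ m ≤ j} y_m) denote the area of the minimum bounding rectangle of ⟨p_i, …, p_j⟩, where p_m = (x_m, y_m). Define F : ℕ → [0, ∞] by F(0) = 0 and, for 1 ≤ j ≤ n, F(j) = inf{ F(j − l) + area(j − l + 1, j) : l_min ≤ l ≤ l_max and l ≤ j } (with inf ∅ = ∞). Then for every 1 ≤ j ≤ n, F(j) equals the infimum, over all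 partitions of ⟨p_1, …, p_j⟩ into consecutive segments each of length between l_min and l_max, of the sum of the minimum-bounding-rectangle areas of the segments (and F(j) = ∞ exactly when no such partition exists). -/
open scoped ENNReal

noncomputable section

/-- Area of the minimum bounding rectangle of the points p_i, …, p_j (inclusive,
1-indexed): the product of the coordinate ranges. -/
noncomputable def mbrArea (p : ℕ → Pt) (i j : ℕ) : ℝ≥0∞ :=
  ENNReal.ofReal
    ((sSup ((fun m => p m 0) '' Set.Icc i j) - sInf ((fun m => p m 0) '' Set.Icc i j)) *
     (sSup ((fun m => p m 1) '' Set.Icc i j) - sInf ((fun m => p m 1) '' Set.Icc i j)))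

/-- The dynamic-programming value: F 0 = 0 and, for j ≥ 1,
F j = inf { F (j − l) + area(j − l + 1, j) : l_min ≤ l ≤ l_max, l ≤ j }
(with inf ∅ = ∞). -/
noncomputable def F (p : ℕ → Pt) (lmin lmax : ℕ) (hmin : 1 ≤ lmin) : ℕ → ℝ≥0∞
  | 0 => 0
  | j + 1 =>
      ⨅ (l : ℕ) (_ : l ∈ Finset.Icc lmin (min lmax (j + 1))),
        F p lmin lmax hmin (j + 1 - l) + mbrArea p (j + 1 - l + 1) (j + 1)
  termination_by j => j
  decreasing_by
    rename_i h
    simp only [Finset.mem_Icc] at h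
    omega

/-- Total MBR cost of a partition of the points starting after the first s points,
given by the list of consecutive block lengths. -/
noncomputable def partitionCost (p : ℕ → Pt) : ℕ → List ℕ → ℝ≥0∞
  | _, [] => 0
  | s, l :: L => mbrArea p (s + 1) (s + l) + partitionCost p (s + l) L

theorem partitionCost_concat (p : ℕ → Pt) (l : ℕ) (L : List ℕ) : ∀ s : ℕ,
    partitionCost p s (L ++ [l]) =
      partitionCost p s L + mbrArea p (s + L.sum + 1) (s + L.sum + l) := by
  induction L with
  | nil => intro s; simp [partitionCost]
  | cons a L ih =>
    intro s
    simp only [List.cons_append, partitionCost, ih, List.sum_cons, add_assoc]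

theorem F_le_step (p : ℕ → Pt) (lmin lmax : ℕ) (hmin : 1 ≤ lmin) (k l : ℕ)
    (h1 : lmin ≤ l) (h2 : l ≤ lmax) :
    F p lmin lmax hmin (k + l) ≤ F p lmin lmax hmin k + mbrArea p (k + 1) (k + l) := by
  obtain ⟨m, rfl⟩ : ∃ m, l = m + 1 := ⟨l - 1, by omega⟩
  have e : k + (m + 1) = (k + m) + 1 := by omega
  rw [e, F]
  refine (iInf₂_le (m + 1) ?_).trans (le_of_eq ?_)
  · simp only [Finset.mem_Icc]; omega
  · have e2 : k + m + 1 - (m + 1) = k := by omega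
    rw [e2]

theorem F_le_partitionCost (p : ℕ → Pt) (lmin lmax : ℕ) (hmin : 1 ≤ lmin) (L : List ℕ) :
    (∀ l ∈ L, lmin ≤ l ∧ l ≤ lmax) →
      F p lmin lmax hmin L.sum ≤ partitionCost p 0 L := by
  induction L using List.reverseRecOn with
  | nil => intro _; simp [F]
  | append_singleton L l ih =>
    intro h
    have hl := h l (by simp)
    have h' := ih (fun a ha => h a (by simp [ha]))
    rw [partitionCost_concat, List.sum_append, List.sum_singleton, zero_add]
    exact (F_le_step p lmin lmax hmin _ l hl.1 hl.2).trans (by gcongr)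

theorem iInf_le_F (p : ℕ → Pt) (lmin lmax : ℕ) (hmin : 1 ≤ lmin) (j : ℕ) :
    (⨅ L ∈ {L : List ℕ | L.sum = j ∧ ∀ l ∈ L, lmin ≤ l ∧ l ≤ lmax},
        partitionCost p 0 L) ≤ F p lmin lmax hmin j := by
  induction j using Nat.strong_induction_on with
  | _ j ih =>
    cases j with
    | zero => exact (iInf₂_le [] (by simp)).trans (by simp [partitionCost])
    | succ j =>
      rw [F]
      refine le_iInf₂ fun l hl => ?_
      simp only [Finset.mem_Icc] at hl
      refine le_trans ?_ (add_le_add_left (ih (j + 1 - l) (by omega)) _)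
      rw [ENNReal.iInf_add]
      refine le_iInf fun L => ?_
      rw [ENNReal.iInf_add]
      refine le_iInf fun hL => ?_
      obtain ⟨hs, hv⟩ := hL
      refine (iInf₂_le (L ++ [l]) ⟨?_, ?_⟩).trans (le_of_eq ?_)
      · have e : j + 1 - l + l = j + 1 := by omega
        rw [partitionCost_concat, zero_add, hs, e]
      · rw [List.sum_append, List.sum_singleton]; omega
      · intro a ha
        rcases List.mem_append.1 ha with ha | ha
        · exact hv a ha
        · rw [List.mem_singleton.1 ha]; omega

/-- Correctness of the DP segment-partitioning recurrence: for 1 ≤ j ≤ n, F(j) equals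
the infimum over all partitions of ⟨p_1, …, p_j⟩ into consecutive segments of lengths
between l_min and l_max of the total MBR area (inf ∅ = ∞, so F(j) = ∞ exactly when
no valid partition exists). -/
theorem F_eq_min_partition_cost (n : ℕ) (p : ℕ → Pt) (lmin lmax : ℕ)
    (hmin : 1 ≤ lmin) (hminmax : lmin ≤ lmax) (j : ℕ) (hj1 : 1 ≤ j) (hj2 : j ≤ n) :
    F p lmin lmax hmin j =
      ⨅ L ∈ {L : List ℕ | L.sum = j ∧ ∀ l ∈ L, lmin ≤ l ∧ l ≤ lmax},
        partitionCost p 0 L := by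
  refine le_antisymm (le_iInf₂ fun L hL => ?_) (iInf_le_F p lmin lmax hmin j)
  obtain ⟨hs, hv⟩ := hL
  rw [← hs]
  exact F_le_partitionCost p lmin lmax hmin L hv

end
end
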